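/- There exist a constant d > 0 and n₀ such that the following holds for all natural numbers n ≥ n₀: for every natural number c with 3·log n < c < n/7, if X is a binomially distributed random variable with n − c trials and success probability 1 − (1 − 1/n)^{c/2}, then Prob[X ≤ c/3] ≤ n^{−d}. -/

import Mathlib

open Real

/-!
The mean of the binomial variable is large: since `(1 - u) ^ y ≤ exp (-u y) ≤ 1 / (1 + u y)`, the
success probability is at least `c / (2n + c)`, so for `c ≤ n/7` the mean is at least
`c (n - c) / (2n + c) ≥ 2c/5`. Since `c/3 = (1 - 1/6) · 2c/5`, the multiplicative Chernoff bound
gives a lower tail of at most `exp (-c/180)`, which is at most `n ^ (-1/60)` for `c ≥ 3 log n`.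
-/

open MeasureTheory ProbabilityTheory unitInterval

lemma exp_neg_le_one_sub_add_sq_div_two {t : ℝ} (ht : 0 ≤ t) : exp (-t) ≤ 1 - t + t ^ 2 / 2 := by
  have h_exp : 1 + t + t ^ 2 / 2 ≤ exp t := quadratic_le_exp_of_nonneg ht
  rw [exp_neg, inv_le_iff_one_le_mul₀ (exp_pos t)]
  calc (1 : ℝ) ≤ 1 + t ^ 4 / 4 := by linarith [pow_nonneg ht 4]
    _ = (1 - t + t ^ 2 / 2) * (1 + t + t ^ 2 / 2) := by ring
    _ ≤ (1 - t + t ^ 2 / 2) * exp t := by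
        gcongr
        nlinarith [sq_nonneg (t - 1)]

lemma one_sub_rpow_le_exp_neg_mul {u y : ℝ} (hu : u ≤ 1) (hy : 0 ≤ y) :
    (1 - u) ^ y ≤ exp (-(u * y)) := by
  rw [← neg_mul, exp_mul]
  exact rpow_le_rpow (sub_nonneg.2 hu) (one_sub_le_exp_neg u) hy

lemma mul_div_one_add_mul_le_one_sub_rpow {u y : ℝ} (hu₀ : 0 ≤ u) (hu₁ : u ≤ 1) (hy : 0 ≤ y) :
    u * y / (1 + u * y) ≤ 1 - (1 - u) ^ y := by
  have h_inv : (1 - u) ^ y ≤ (1 + u * y)⁻¹ :=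
    calc (1 - u) ^ y ≤ exp (-(u * y)) := one_sub_rpow_le_exp_neg_mul hu₁ hy
      _ = (exp (u * y))⁻¹ := exp_neg _
      _ ≤ (1 + u * y)⁻¹ := by
          gcongr
          linarith [add_one_le_exp (u * y)]
  calc u * y / (1 + u * y) = 1 - (1 + u * y)⁻¹ := by field_simp; ring
    _ ≤ 1 - (1 - u) ^ y := by gcongr

lemma two_fifths_mul_le_sub_mul_one_sub_rpow {x y : ℝ} (hx : 1 ≤ x) (hy : 0 ≤ y)
    (hyx : y ≤ x / 7) : 2 / 5 * y ≤ (x - y) * (1 - (1 - 1 / x) ^ (y / 2)) := by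
  have hx₀ : 0 < x := by linarith
  have h_prob : y / (2 * x + y) ≤ 1 - (1 - 1 / x) ^ (y / 2) :=
    calc y / (2 * x + y) = 1 / x * (y / 2) / (1 + 1 / x * (y / 2)) := by field_simp
      _ ≤ _ := mul_div_one_add_mul_le_one_sub_rpow (by positivity)
          ((div_le_one hx₀).2 hx) (by positivity)
  calc 2 / 5 * y ≤ (x - y) * (y / (2 * x + y)) := by
        rw [← mul_div_assoc, le_div_iff₀ (by positivity)]
        nlinarith
    _ ≤ (x - y) * (1 - (1 - 1 / x) ^ (y / 2)) := by
        gcongr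
        linarith

section Binomial

variable (m : ℕ) (p : I)

lemma mgf_binomial (t : ℝ) :
    mgf (fun k : ℕ ↦ (k : ℝ)) Bin(m, p) t = (p * exp t + (1 - p)) ^ m := by
  rw [mgf, integral_binomial, add_pow, Nat.range_succ_eq_Iic]
  refine Finset.sum_congr rfl fun k _ ↦ ?_
  rw [mul_comm t, exp_nat_mul, smul_eq_mul, mul_pow]
  ring

lemma mgf_binomial_le_exp (t : ℝ) :
    mgf (fun k : ℕ ↦ (k : ℝ)) Bin(m, p) t ≤ exp (m * p * (exp t - 1)) := by
  have h_base : 0 ≤ p * exp t + (1 - p) :=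
    add_nonneg (mul_nonneg p.2.1 (exp_nonneg t)) (sub_nonneg.2 p.2.2)
  rw [mgf_binomial, mul_assoc, exp_nat_mul]
  gcongr
  linarith [add_one_le_exp (p * (exp t - 1))]

lemma binomial_real_setOf_cast_le (a : ℝ) :
    Bin(m, p).real {k | (k : ℝ) ≤ a} =
      ∑ k ∈ Finset.range (m + 1),
        if (k : ℝ) ≤ a then (m.choose k : ℝ) * p ^ k * (1 - p) ^ (m - k) else 0 := by
  rw [← integral_indicator_one .of_discrete, integral_binomial, Nat.range_succ_eq_Iic]
  simp [Set.indicator_apply]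

variable {m p}

lemma binomial_real_setOf_cast_le_le_exp {a δ : ℝ} (hδ : 0 ≤ δ) (ha : a ≤ (1 - δ) * (m * p)) :
    Bin(m, p).real {k | (k : ℝ) ≤ a} ≤ exp (-(δ ^ 2 * (m * p) / 2)) := by
  have h_mean : (0 : ℝ) ≤ m * p := mul_nonneg m.cast_nonneg p.2.1
  -- `-δ` minimises the exponent once `exp (-δ)` is replaced by its quadratic upper bound.
  calc Bin(m, p).real {k | (k : ℝ) ≤ a}
      ≤ exp (-(-δ) * a) * mgf (fun k : ℕ ↦ (k : ℝ)) Bin(m, p) (-δ) :=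
        measure_le_le_exp_mul_mgf a (neg_nonpos.2 hδ) (integrable_binomial _)
    _ ≤ exp (-(-δ) * a) * exp (m * p * (exp (-δ) - 1)) := by
        gcongr
        exact mgf_binomial_le_exp m p (-δ)
    _ = exp (δ * a + m * p * (exp (-δ) - 1)) := by rw [neg_neg, exp_add]
    _ ≤ exp (δ * ((1 - δ) * (m * p)) + m * p * (1 - δ + δ ^ 2 / 2 - 1)) := by
        gcongr
        exact exp_neg_le_one_sub_add_sq_div_two hδ
    _ = exp (-(δ ^ 2 * (m * p) / 2)) := by ring_nf

end Binomial

theorem stmt_11 :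
    ∃ d : ℝ, 0 < d ∧ ∃ n₀ : ℕ, ∀ n : ℕ, n₀ ≤ n →
      ∀ c : ℕ, 3 * Real.log n < (c : ℝ) → (c : ℝ) < (n : ℝ) / 7 →
        ∀ p : ℝ, p = 1 - (1 - 1 / (n : ℝ)) ^ ((c : ℝ) / 2) →
          (∑ k ∈ Finset.range (n - c + 1),
              if (k : ℝ) ≤ (c : ℝ) / 3 then
                ((n - c).choose k : ℝ) * p ^ k * (1 - p) ^ (n - c - k)
              else 0)
            ≤ (n : ℝ) ^ (-d) := by
  refine ⟨1 / 60, by norm_num, 1, fun n hn c h_log hcn p hp ↦ ?_⟩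
  have hn₁ : (1 : ℝ) ≤ n := by exact_mod_cast hn
  have hu₀ : 0 ≤ 1 - 1 / (n : ℝ) := sub_nonneg.2 ((div_le_one (by positivity)).2 hn₁)
  have hpI : p ∈ I := by
    rw [hp]
    exact Set.Icc.one_sub_mem
      ⟨rpow_nonneg hu₀ _, rpow_le_one hu₀ (sub_le_self _ (by positivity)) (by positivity)⟩
  lift p to I using hpI
  have h_mean : 2 / 5 * (c : ℝ) ≤ (n - c : ℕ) * p := by
    rw [hp, Nat.cast_sub (by exact_mod_cast (by linarith : (c : ℝ) ≤ n))]
    exact two_fifths_mul_le_sub_mul_one_sub_rpow hn₁ c.cast_nonneg hcn.le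
  rw [← binomial_real_setOf_cast_le]
  calc _ ≤ exp (-((1 / 6) ^ 2 * ((n - c : ℕ) * p) / 2)) :=
        binomial_real_setOf_cast_le_le_exp (by norm_num) (by linarith)
    _ ≤ exp (log n * -(1 / 60)) := exp_le_exp.2 (by linarith)
    _ = (n : ℝ) ^ (-(1 / 60) : ℝ) := (rpow_def_of_pos (by positivity) _).symm
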